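/- Let G be a 3-connected signed graph that is unbalanced (contains a negative cycle). Then G has a negative peripheral cycle, i.e., an induced negative cycle C such that G − V(C) is connected. -/

import Mathlib

open SimpleGraph

/-- `G` is 3-connected: at least 4 vertices, and deleting any set of at most
two vertices leaves a connected graph. -/
def ThreeConnected {V : Type*} [Fintype V] [DecidableEq V] (G : SimpleGraph V) : Prop :=
  4 ≤ Fintype.card V ∧
  ∀ S : Finset V, S.card ≤ 2 → (G.induce {x | x ∉ S}).Connected

/-- A cycle (closed walk that is a cycle) is negative when it carries an odd
number of negative edges; `σ e = false` means `e` is negative. -/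
def NegativeCycle {V : Type*} (G : SimpleGraph V) (σ : Sym2 V → Bool)
    {v : V} (c : G.Walk v v) : Prop :=
  c.IsCycle ∧ Odd (c.edges.countP fun e => !σ e)

namespace PerCyc

/-- number of negative edges of a walk -/
def wt {V : Type*} {G : SimpleGraph V} (σ : Sym2 V → Bool) {u v : V} (p : G.Walk u v) : ℕ :=
  p.edges.countP fun e => !σ e

section
variable {V : Type*} {G : SimpleGraph V} (σ : Sym2 V → Bool)

lemma wt_append {u v w : V} (p : G.Walk u v) (q : G.Walk v w) :
    wt σ (p.append q) = wt σ p + wt σ q := by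
  simp [wt, Walk.edges_append, List.countP_append]

lemma wt_reverse {u v : V} (p : G.Walk u v) : wt σ p.reverse = wt σ p := by
  simp [wt, Walk.edges_reverse]

/-- weight of an edge -/
def ew (σ : Sym2 V → Bool) (u v : V) : ℕ := if σ s(u, v) then 0 else 1

lemma ew_comm (u v : V) : ew σ u v = ew σ v u := by
  simp [ew, Sym2.eq_swap]

lemma wt_nil {u : V} : wt σ (Walk.nil : G.Walk u u) = 0 := by
  simp [wt]

lemma wt_cons {u v w : V} (h : G.Adj u v) (p : G.Walk v w) :
    wt σ (Walk.cons h p) = ew σ u v + wt σ p := by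
  simp only [wt, Walk.edges_cons, List.countP_cons, ew]
  cases σ s(u, v) <;> simp [add_comm]

lemma path_or_cycle [DecidableEq V] {u v : V} (p : G.Walk u v) :
    (∃ q : G.Walk u v, q.IsPath ∧ q.support ⊆ p.support ∧ (wt σ q) % 2 = (wt σ p) % 2) ∨
    ∃ (x : V) (c : G.Walk x x), c.IsCycle ∧ c.support ⊆ p.support ∧ Odd (wt σ c) := by
  induction p with
  | nil => exact Or.inl ⟨Walk.nil, by simp, by simp, rfl⟩
  | @cons u w v h p ih =>
    rcases ih with ⟨q, hq, hs, hw⟩ | ⟨x, c, hc, hs, ho⟩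
    · by_cases hu : u ∈ q.support
      · obtain ⟨p1, p2, rfl⟩ := Walk.mem_support_iff_exists_append.1 hu
        have h1 := hq.of_append_left
        have h2 := hq.of_append_right
        rw [wt_append] at hw
        have hs1 : p1.support ⊆ p.support := fun x hx => hs (by simp [Walk.mem_support_append_iff, hx])
        have hs2 : p2.support ⊆ p.support := fun x hx => hs (by simp [Walk.mem_support_append_iff, hx])
        by_cases he : s(u, w) ∈ p1.edges
        · left
          refine ⟨p2, h2, fun x hx => by simp [hs2 hx], ?_⟩
          have hp1 : wt σ p1 = ew σ u w := by
            rw [Sym2.eq_swap] at he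
            have e1 := h1.eq_snd_of_mem_edges he
            cases p1 with
            | nil => exact absurd h (by simp)
            | cons h' p1' =>
              simp at e1
              subst e1
              have : p1' = Walk.nil := by
                have := h1.of_cons
                exact (Walk.isPath_iff_eq_nil).1 this
              subst this
              rw [wt_cons, wt_nil, ew_comm]; rfl
          rw [wt_cons, ← hp1]
          omega
        · by_cases ho : Odd (wt σ (Walk.cons h p1))
          · right
            refine ⟨u, Walk.cons h p1, (Walk.cons_isCycle_iff _ _).2 ⟨h1, he⟩, ?_, ho⟩
            intro x hx
            simp only [Walk.support_cons, List.mem_cons] at hx ⊢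
            exact hx.imp_right (@hs1 x)
          · left
            refine ⟨p2, h2, fun x hx => by simp [hs2 hx], ?_⟩
            rw [wt_cons, Nat.odd_iff] at ho
            rw [wt_cons]
            omega
      · left
        refine ⟨Walk.cons h q, (Walk.cons_isPath_iff _ _).2 ⟨hq, hu⟩, ?_, ?_⟩
        · intro x hx
          simp only [Walk.support_cons, List.mem_cons] at hx ⊢
          exact hx.imp_right (@hs x)
        · rw [wt_cons, wt_cons]; omega
    · right
      exact ⟨x, c, hc, fun y hy => by simp [hs hy], ho⟩

lemma exists_cycle [DecidableEq V] {u : V} (p : G.Walk u u) (hp : Odd (wt σ p)) :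
    ∃ (x : V) (c : G.Walk x x), c.IsCycle ∧ c.support ⊆ p.support ∧ Odd (wt σ c) := by
  rcases path_or_cycle σ p with ⟨q, hq, -, hw⟩ | h
  · rw [(Walk.isPath_iff_eq_nil).1 hq, wt_nil] at hw
    rw [Nat.odd_iff] at hp
    omega
  · exact h

/-- rotate an odd cycle to a given vertex and split off the first edge -/
lemma rotate_cycle [DecidableEq V] {x v : V} (c : G.Walk x x) (hc : c.IsCycle)
    (ho : Odd (wt σ c)) (hv : v ∈ c.support) :
    ∃ (u : V) (h : G.Adj v u) (p : G.Walk u v), p.IsPath ∧ Odd (ew σ v u + wt σ p) ∧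
      (∀ y, y ∈ p.support ↔ y ∈ c.support) ∧
      (∀ e, e ∈ c.edges ↔ e = s(v, u) ∨ e ∈ p.edges) ∧ s(v, u) ∉ p.edges := by
  have hr := hc.rotate hv
  have hm := fun y => Walk.mem_support_rotate_iff (w := y) c v hv
  have he := (Walk.rotate_edges c v hv).perm
  generalize c.rotate v hv = d at hr hm he
  cases d with
  | nil => simp at hr
  | @cons _ u _ h p =>
    have := (Walk.cons_isCycle_iff _ _).1 hr
    refine ⟨u, h, p, this.1, ?_, ?_, ?_, this.2⟩
    · rw [← wt_cons σ h]
      unfold wt at *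
      rwa [he.countP_eq]
    · intro y
      rw [← hm y]
      simp only [Walk.support_cons, List.mem_cons]
      constructor
      · exact Or.inr
      · rintro (rfl | h)
        · exact p.end_mem_support
        · exact h
    · intro e
      rw [← he.mem_iff]; simp

lemma chord [DecidableEq V] {x v w : V} (c : G.Walk x x) (hc : c.IsCycle)
    (ho : Odd (wt σ c)) (hv : v ∈ c.support) (hw : w ∈ c.support) (hvw : G.Adj v w)
    (hne : s(v, w) ∉ c.edges) :
    ∃ (y : V) (d : G.Walk y y), Odd (wt σ d) ∧ d.support ⊆ c.support ∧
      ∃ z ∈ c.support, z ∉ d.support := by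
  obtain ⟨u, h, p, hp, hodd, hs, he, hnu⟩ := rotate_cycle σ c hc ho hv
  rw [← hs] at hw
  obtain ⟨p1, p2, rfl⟩ := Walk.mem_support_iff_exists_append.1 hw
  have hs1 : p1.support ⊆ c.support := fun x hx => (hs x).1 (by simp [Walk.mem_support_append_iff, hx])
  have hs2 : p2.support ⊆ c.support := fun x hx => (hs x).1 (by simp [Walk.mem_support_append_iff, hx])
  have huw : u ≠ w := by
    rintro rfl
    exact hne ((he _).2 (Or.inl rfl))
  rw [wt_append] at hodd
  by_cases h1 : Odd (wt σ (Walk.cons hvw p2))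
  · refine ⟨v, Walk.cons hvw p2, h1, ?_, u, hs1 p1.start_mem_support, ?_⟩
    · intro y hy
      simp only [Walk.support_cons, List.mem_cons] at hy
      rcases hy with rfl | hy
      · exact hv
      · exact hs2 hy
    · simp only [Walk.support_cons, List.mem_cons, not_or]
      refine ⟨h.ne', fun hu => ?_⟩
      exact hp.ne_of_mem_support_of_append huw p1.start_mem_support hu rfl
  · have h2 : Odd (wt σ (Walk.cons hvw.symm (Walk.cons h p1))) := by
      rw [wt_cons] at h1
      rw [wt_cons, wt_cons, ew_comm]
      rw [Nat.odd_iff] at *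
      omega
    cases p2 with
    | nil => exact absurd hvw (by simp)
    | @cons _ z _ hz p2 =>
      refine ⟨w, _, h2, ?_, z, hs2 (by simp), ?_⟩
      · intro y hy
        simp only [Walk.support_cons, List.mem_cons] at hy
        rcases hy with rfl | rfl | hy
        · exact hs2 (by simp)
        · exact hv
        · exact hs1 hy
      · simp only [Walk.support_cons, List.mem_cons, not_or]
        refine ⟨hz.ne', ?_, fun h' => ?_⟩
        · rintro rfl
          apply hne
          rw [he]
          right
          simp [Walk.edges_append, Sym2.eq_swap]
        · exact hp.ne_of_mem_support_of_append (y := z) hz.ne' h' (by simp) rfl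

lemma reachN {B N : V → Prop} (S : V → Prop)
    (hN : ∀ x y, B x → G.Adj y x → ¬ B y → N y) {w b : V} (q : G.Walk w b) (hb : B b)
    (hq : ∀ x ∈ q.support, ¬ S x) (hwB : ¬ B w) (hwN : ¬ N w) :
    ∃ n, N n ∧ ¬ S n ∧ ∃ r : G.Walk w n,
      ∀ x ∈ r.support, ¬ S x ∧ (N x → x = n) ∧ (B x → N x) := by
  induction q with
  | nil => exact absurd hb hwB
  | @cons w y b h q ih =>
    have hyB : ¬ B y := fun hy => hwN (hN y w hy h hwB)
    have hwS : ¬ S w := hq w (by simp)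
    have hyS : ¬ S y := hq y (by simp)
    by_cases hyN : N y
    · refine ⟨y, hyN, hyS, Walk.cons h Walk.nil, ?_⟩
      intro x hx
      simp at hx
      rcases hx with rfl | rfl
      · exact ⟨hwS, fun h => absurd h hwN, fun h => absurd h hwB⟩
      · exact ⟨hyS, fun _ => rfl, fun _ => hyN⟩
    · obtain ⟨n, hn, hnS, r, hr⟩ := ih hb (fun x hx => hq x (by simp [hx])) hyB hyN
      refine ⟨n, hn, hnS, Walk.cons h r, ?_⟩
      intro x hx
      simp only [Walk.support_cons, List.mem_cons] at hx
      rcases hx with rfl | hx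
      · exact ⟨hwS, fun h => absurd h hwN, fun h => absurd h hwB⟩
      · exact hr x hx

/-- theta-type argument -/
lemma theta {v u w n1 n2 : V} (h : G.Adj v u) (hw : G.Adj v w)
    (p1 : G.Walk u n1) (p2 : G.Walk n1 n2) (p3 : G.Walk n2 v)
    (hp : (p1.append (p2.append p3)).IsPath)
    (ho : Odd (ew σ v u + wt σ (p1.append (p2.append p3))))
    (r1 : G.Walk w n1) (r2 : G.Walk w n2)
    (h12 : n1 ≠ n2) (h1v : n1 ≠ v) (h2v : n2 ≠ v)
    (hr1v : v ∉ r1.support) (hr2v : v ∉ r2.support)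
    (hr12 : n2 ∉ r1.support) (hr21 : n1 ∉ r2.support) :
    ∃ (y : V) (d : G.Walk y y), Odd (wt σ d) ∧
      (∀ x ∈ d.support, x ∈ (p1.append (p2.append p3)).support ∨ x ∈ r1.support ∨ x ∈ r2.support) ∧
      (n1 ∉ d.support ∨ n2 ∉ d.support ∨ v ∉ d.support) := by
  have hp' := hp.of_append_right
  have hn1p3 : n1 ∉ p3.support := fun hx =>
    hp'.ne_of_mem_support_of_append h12 p2.start_mem_support hx rfl
  have hn2p1 : n2 ∉ p1.support := fun hx =>
    hp.ne_of_mem_support_of_append h12.symm hx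
      (by simp [Walk.mem_support_append_iff]) rfl
  have hvp2 : v ∉ p2.support := fun hx =>
    hp'.ne_of_mem_support_of_append h2v.symm hx p3.end_mem_support rfl
  by_cases hA : Odd (wt σ (Walk.cons hw (r2.append p3)))
  · refine ⟨_, _, hA, ?_, Or.inl ?_⟩
    · intro x hx
      simp only [Walk.support_cons, List.mem_cons, Walk.mem_support_append_iff] at hx ⊢
      rcases hx with rfl | hx | hx
      · simp
      · simp [hx]
      · simp [hx]
    · simp [Walk.mem_support_append_iff, h1v, hr21, hn1p3]
  by_cases hB : Odd (wt σ (Walk.cons hw (r1.append (p1.reverse.append (Walk.cons h.symm Walk.nil)))))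
  · refine ⟨_, _, hB, ?_, Or.inr (Or.inl ?_)⟩
    · intro x hx
      simp only [Walk.support_cons, List.mem_cons, Walk.mem_support_append_iff, Walk.support_reverse,
        List.mem_reverse, Walk.support_nil, List.not_mem_nil, or_false] at hx ⊢
      rcases hx with rfl | hx | hx | rfl | rfl <;> simp [*]
    · have : n2 ≠ u := by
        rintro rfl; exact hn2p1 p1.start_mem_support
      simp [Walk.mem_support_append_iff, h2v, hr12, hn2p1, this]
  refine ⟨_, r1.append (p2.append r2.reverse), ?_, ?_, Or.inr (Or.inr ?_)⟩
  · simp only [wt_cons, wt_append, wt_reverse, wt_nil, ew_comm σ u v, Nat.odd_iff] at hA hB ho ⊢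
    omega
  · intro x hx
    simp only [Walk.mem_support_append_iff, Walk.support_reverse, List.mem_reverse] at hx ⊢
    rcases hx with hx | hx | hx <;> simp [hx]
  · simp [Walk.mem_support_append_iff, hr1v, hr2v, hvp2]

lemma conn_walk {S : Finset V} (hS : (G.induce {x | x ∉ S}).Connected) {a b : V}
    (ha : a ∉ S) (hb : b ∉ S) : ∃ q : G.Walk a b, ∀ x ∈ q.support, x ∉ S := by
  obtain ⟨q⟩ := hS.preconnected ⟨a, ha⟩ ⟨b, hb⟩
  refine ⟨q.map (Embedding.induce _).toHom, ?_⟩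
  intro x hx
  have hm := Walk.support_map (Embedding.induce (G := G) {x | x ∉ S}).toHom q
  have hx : x ∈ (q.map (Embedding.induce (G := G) {x | x ∉ S}).toHom).support := hx
  replace hx := hm ▸ hx
  rw [List.mem_map] at hx
  obtain ⟨y, -, rfl⟩ := hx
  exact y.2

lemma split2 {u v n1 n2 : V} (p : G.Walk u v) (h1 : n1 ∈ p.support) (h2 : n2 ∈ p.support) :
    (∃ p1 p2 p3, p = Walk.append (v := n1) p1 (Walk.append (v := n2) p2 p3)) ∨
    (∃ p1 p2 p3, p = Walk.append (v := n2) p1 (Walk.append (v := n1) p2 p3)) := by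
  obtain ⟨p1, p2, rfl⟩ := Walk.mem_support_iff_exists_append.1 h1
  rw [Walk.mem_support_append_iff] at h2
  rcases h2 with h2 | h2
  · obtain ⟨a, b, rfl⟩ := Walk.mem_support_iff_exists_append.1 h2
    exact Or.inr ⟨a, b, p2, by rw [Walk.append_assoc]⟩
  · obtain ⟨a, b, rfl⟩ := Walk.mem_support_iff_exists_append.1 h2
    exact Or.inl ⟨p1, a, b, rfl⟩

end

/-- the admissible sets -/
def Good {V : Type*} (G : SimpleGraph V) (σ : Sym2 V → Bool) (B : Finset V) : Prop :=
  (G.induce (B : Set V)).Connected ∧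
    ∃ (y : V) (d : G.Walk y y), Odd (wt σ d) ∧ ∀ x ∈ d.support, x ∉ B

lemma exists_good {V : Type*} [Fintype V] [DecidableEq V]
    (G : SimpleGraph V) (σ : Sym2 V → Bool) (h3 : ThreeConnected G)
    {v : V} (c : G.Walk v v) (hc : c.IsCycle) (ho : Odd (wt σ c)) :
    ∃ B, Good G σ B := by
  suffices h : ∃ (y : V) (d : G.Walk y y), Odd (wt σ d) ∧ ∃ z, z ∉ d.support by
    obtain ⟨y, d, hd, z, hz⟩ := h
    refine ⟨{z}, ?_, y, d, hd, ?_⟩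
    · rw [Finset.coe_singleton, induce_singleton_eq_top]
      exact connected_top
    · intro x hx
      rw [Finset.mem_singleton]
      rintro rfl
      exact hz hx
  by_contra hcon
  push Not at hcon
  have hall : ∀ z, z ∈ c.support := hcon _ c ho
  obtain ⟨u, h, p, hp, hodd, hs, he, hnu⟩ := rotate_cycle σ c hc ho (hall v)
  have hnn : ¬ p.Nil := fun hn => h.ne hn.eq.symm
  have hadj : G.Adj p.penultimate v := p.adj_penultimate hnn
  -- find a third neighbour
  obtain ⟨w, hw, hwS⟩ : ∃ w, G.Adj v w ∧ w ∉ ({u, p.penultimate} : Finset V) := by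
    have hvS : v ∉ ({u, p.penultimate} : Finset V) := by
      simp [h.ne, hadj.ne']
    obtain ⟨x, hx⟩ : ∃ x, x ∉ ({v, u, p.penultimate} : Finset V) := by
      by_contra hx
      push Not at hx
      have h1 : ({v, u, p.penultimate} : Finset V) = Finset.univ := by
        ext x; simp only [hx, Finset.mem_univ]
      have h2 := Finset.card_le_three (a := v) (b := u) (c := p.penultimate)
      rw [h1, Finset.card_univ] at h2
      have := h3.1
      omega
    rw [Finset.mem_insert, not_or] at hx
    obtain ⟨q, hq⟩ := conn_walk (h3.2 _ (Finset.card_le_two (a := u) (b := p.penultimate))) hvS hx.2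
    cases q with
    | nil => exact absurd rfl hx.1
    | @cons _ w _ hw q => exact ⟨w, hw, hq w (by simp)⟩
  simp only [Finset.mem_insert, Finset.mem_singleton, not_or] at hwS
  have hne : s(v, w) ∉ c.edges := by
    rw [he]
    rintro (h' | h')
    · rw [Sym2.congr_right] at h'
      exact hwS.1 h'
    · exact hwS.2 (hp.eq_penultimate_of_mem_edges h')
  obtain ⟨y, d, hd, -, z, -, hz⟩ := chord σ c hc ho (hall v) (hall w) hw hne
  exact hz (hcon y d hd z)

end PerCyc

/-- a 3-connected unbalanced signed graph has a negative
peripheral cycle, i.e. an induced negative cycle `C` with `G − V(C)`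
connected. -/
theorem exists_negative_peripheral_cycle {V : Type*} [Fintype V] [DecidableEq V]
    (G : SimpleGraph V) (σ : Sym2 V → Bool)
    (h3 : ThreeConnected G)
    (hunbal : ∃ (v : V) (c : G.Walk v v), NegativeCycle G σ c) :
    ∃ (v : V) (c : G.Walk v v), NegativeCycle G σ c ∧
      (∀ u w, u ∈ c.support → w ∈ c.support → G.Adj u w → s(u, w) ∈ c.edges) ∧
      (G.induce {x | x ∉ c.support}).Connected := by
  classical
  obtain ⟨v0, c0, hc0, ho0⟩ := hunbal
  obtain ⟨B0, hB0⟩ := PerCyc.exists_good G σ h3 c0 hc0 ho0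
  obtain ⟨B, hB, hmax⟩ := Finset.exists_max_image
    (Finset.univ.filter fun B => PerCyc.Good G σ B) Finset.card ⟨B0, by simpa using hB0⟩
  simp only [Finset.mem_filter, Finset.mem_univ, true_and] at hB hmax
  obtain ⟨hBc, y0, d0, hd0, hd0B⟩ := hB
  let N : V → Prop := fun x => x ∉ B ∧ ∃ b ∈ B, G.Adj x b
  -- every odd closed walk avoiding B contains N
  have key : ∀ (y : V) (d : G.Walk y y), Odd (PerCyc.wt σ d) → (∀ x ∈ d.support, x ∉ B) →
      ∀ n, N n → n ∈ d.support := by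
    rintro y d hd hdB n ⟨hnB, b, hb, hnb⟩
    by_contra hn
    have hg : PerCyc.Good G σ (insert n B) := by
      refine ⟨?_, y, d, hd, ?_⟩
      · have h1 := induce_union_connected (G := G) (s := {n, b}) (t := (B : Set V))
          (induce_pair_connected_of_adj hnb).preconnected hBc.preconnected ⟨b, by simp [hb]⟩
        have h2 : ({n, b} ∪ (B : Set V)) = ((insert n B : Finset V) : Set V) := by
          ext x
          simp only [Set.mem_union, Set.mem_insert_iff, Set.mem_singleton_iff, Finset.mem_coe,
            Finset.coe_insert]
          constructor
          · rintro ((h | rfl) | h)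
            · exact Or.inl h
            · exact Or.inr hb
            · exact Or.inr h
          · rintro (h | h)
            · exact Or.inl (Or.inl h)
            · exact Or.inr h
        rwa [h2] at h1
      · intro x hx hx'
        rw [Finset.mem_insert] at hx'
        rcases hx' with rfl | hx'
        · exact hn hx
        · exact hdB x hx hx'
    have := hmax _ hg
    rw [Finset.card_insert_of_notMem hnB] at this
    omega
  obtain ⟨x0, c, hc, hcs, ho⟩ := PerCyc.exists_cycle σ d0 hd0
  have hcB : ∀ x ∈ c.support, x ∉ B := fun x hx => hd0B x (hcs hx)
  have hNc := key x0 c ho hcB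
  obtain ⟨⟨b0, hb0⟩⟩ := hBc.nonempty
  have hb0' : b0 ∈ B := hb0
  have hNdef : ∀ x y, x ∈ B → G.Adj y x → y ∉ B → N y := fun x y hx hyx hy => ⟨hy, x, hx, hyx⟩
  -- neighbours of N outside B are in N
  have hclosed : ∀ v w, N v → G.Adj v w → w ∉ B → N w := by
    intro v w hv hvw hwB
    by_contra hwN
    have hreach : ∀ S : Finset V, S.card ≤ 2 → (∀ s ∈ S, N s) →
        ∃ n, N n ∧ n ∉ S ∧ ∃ r : G.Walk w n,
          ∀ x ∈ r.support, x ∉ S ∧ (N x → x = n) ∧ (x ∈ B → N x) := by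
      intro S hS hSN
      obtain ⟨q, hq⟩ := PerCyc.conn_walk (h3.2 S hS) (a := w) (b := b0)
        (fun h => hwN (hSN w h)) (fun h => (hSN b0 h).1 hb0')
      exact PerCyc.reachN (B := fun x => x ∈ B) (N := N) (fun x => x ∈ S) hNdef q hb0' hq hwB hwN
    obtain ⟨n1, hn1, hn1v, r1, hr1⟩ := hreach {v} (by simp) (by simpa using hv)
    obtain ⟨n2, hn2, hn2v, r2, hr2⟩ := hreach {v, n1} Finset.card_le_two (by
      intro s hs
      simp only [Finset.mem_insert, Finset.mem_singleton] at hs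
      rcases hs with rfl | rfl
      · exact hv
      · exact hn1)
    simp only [Finset.mem_insert, Finset.mem_singleton, not_or] at hn1v hn2v hr1 hr2
    have hr12 : n2 ∉ r1.support := fun h => hn2v.2 ((hr1 _ h).2.1 hn2)
    have hr21 : n1 ∉ r2.support := fun h => (hr2 _ h).1.2 rfl
    have hr1v : v ∉ r1.support := fun h => (hr1 _ h).1 rfl
    have hr2v : v ∉ r2.support := fun h => (hr2 _ h).1.1 rfl
    have hr1B : ∀ x ∈ r1.support, x ∉ B := fun x hx h => ((hr1 x hx).2.2 h).1 h
    have hr2B : ∀ x ∈ r2.support, x ∉ B := fun x hx h => ((hr2 x hx).2.2 h).1 h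
    obtain ⟨u, h, p, hp, hodd, hs, -, -⟩ := PerCyc.rotate_cycle σ c hc ho (hNc v hv)
    have hpB : ∀ x ∈ p.support, x ∉ B := fun x hx => hcB x ((hs x).1 hx)
    rcases PerCyc.split2 p ((hs _).2 (hNc _ hn1)) ((hs _).2 (hNc _ hn2)) with
      ⟨p1, p2, p3, rfl⟩ | ⟨p1, p2, p3, rfl⟩
    · obtain ⟨y, d, hd, hds, hmiss⟩ := PerCyc.theta σ h hvw p1 p2 p3 hp hodd r1 r2
        (Ne.symm hn2v.2) hn1v hn2v.1 hr1v hr2v hr12 hr21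
      have hk := key y d hd (fun x hx => by
        rcases hds x hx with h | h | h
        · exact hpB x h
        · exact hr1B x h
        · exact hr2B x h)
      rcases hmiss with h | h | h
      · exact h (hk _ hn1)
      · exact h (hk _ hn2)
      · exact h (hk _ hv)
    · obtain ⟨y, d, hd, hds, hmiss⟩ := PerCyc.theta σ h hvw p1 p2 p3 hp hodd r2 r1
        hn2v.2 hn2v.1 hn1v hr2v hr1v hr21 hr12
      have hk := key y d hd (fun x hx => by
        rcases hds x hx with h | h | h
        · exact hpB x h
        · exact hr2B x h
        · exact hr1B x h)
      rcases hmiss with h | h | h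
      · exact h (hk _ hn2)
      · exact h (hk _ hn1)
      · exact h (hk _ hv)
  -- hence everything outside B is in N
  have hall : ∀ x, x ∉ B → N x := by
    intro x hx
    by_contra hxN
    obtain ⟨q, -⟩ := PerCyc.conn_walk (h3.2 ∅ (by simp)) (a := x) (b := b0) (by simp) (by simp)
    obtain ⟨n, hn, -, r, hr⟩ := PerCyc.reachN (B := fun x => x ∈ B) (N := N) (fun _ => False)
      hNdef q hb0' (by simp) hx hxN
    have hrB : ∀ x ∈ r.support, x ∉ B := fun x hx h => ((hr x hx).2.2 h).1 h
    have aux : ∀ (a b : V) (r : G.Walk a b), N b → (∀ x ∈ r.support, x ∉ B) → N a := by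
      intro a b r
      induction r with
      | nil => exact fun h _ => h
      | @cons a a' b h r ih =>
        intro hb hr
        exact hclosed a' a (ih hb (fun x hx => hr x (by simp [hx]))) h.symm (hr a (by simp))
    exact hxN (aux x n r hn hrB)
  have hsupp : ∀ x, x ∉ c.support ↔ x ∈ B := by
    intro x
    constructor
    · intro hx
      by_contra hxB
      exact hx (hNc x (hall x hxB))
    · intro hx hx'
      exact hcB x hx' hx
  refine ⟨x0, c, ⟨hc, ho⟩, ?_, ?_⟩
  · intro u w hu hw huw
    by_contra hne
    obtain ⟨y, d, hd, hds, z, hz, hzd⟩ := PerCyc.chord σ c hc ho hu hw huw hne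
    exact hzd (key y d hd (fun x hx => hcB x (hds hx)) z (hall z (hcB z hz)))
  · have : {x | x ∉ c.support} = (B : Set V) := by
      ext x
      exact hsupp x
    rw [this]
    exact hBc
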